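/- arXiv:math/0309313 — 5 statements merged into one kernel-verified Lean document; each statement's English description precedes it below -/
import Mathlib

section
/- Every finite solvable group of derived length exactly 3 has composition length at least 4, and there exists a finite solvable group of derived length exactly 3 with composition length equal to 4. -/
/-!
Write `D i` for the terms of the derived series of `G`.

Lower bound. If `D 2 ≠ 1`, solvability makes `1 < D 2 < D 1 < G` strict, so each of `|D 2|`,
`|D 1 : D 2|` and `|G : D 1|` contributes at least one prime factor to `|G|`. If `|G|` had at most
three prime factors, `D 2` and `D 1 / D 2` would have prime order, hence be cyclic. The automorphism
group of the cyclic group `D 2` is abelian, so the conjugation action of `G` on `D 2` kills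
`D 1 = [G, G]`; thus `D 2` is central in `D 1` with cyclic quotient, `D 1` is abelian, and
`D 2 = [D 1, D 1] = 1` (`derivedSeries_two_eq_bot_of_isCyclic`), a contradiction.

Sharpness. The symmetric group on four letters has order `24 = 2³ · 3` and derived series
`S₄ > A₄ > V₄ > 1`. Only the inclusions `D 1 ≤ A₄`, `D 2 ≤ V₄` and a nontrivial
element of `D 2` are needed, and these are finite checks.
-/

/-- `SolvableGroupData G d n` says that `G` is a finite solvable group of derived
length exactly `d` and composition length (= Ω of its order) equal to `n`. -/
def SolvableGroupData (G : Type*) [Group G] (d n : ℕ) : Prop :=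
  Finite G ∧ IsSolvable G ∧ derivedSeries G d = ⊥ ∧ derivedSeries G (d - 1) ≠ ⊥ ∧
    (Nat.card G).primeFactorsList.length = n

/-- The commutator subgroup centralizes every cyclic normal subgroup, because the automorphism
group of a cyclic group is abelian. -/
lemma commute_of_mem_commutator_of_isCyclic {G : Type*} [Group G] (N : Subgroup G) [N.Normal]
    [IsCyclic N] {g n : G} (hg : g ∈ commutator G) (hn : n ∈ N) : g * n = n * g := by
  let f : G →* (ZMod (Nat.card N))ˣ :=
    (IsCyclic.mulAutMulEquiv N).toMonoidHom.comp (MulAut.conjNormal (H := N))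
  have h1 : f g = 1 := Abelianization.commutator_subset_ker f hg
  have h2 : MulAut.conjNormal (H := N) g = 1 := by
    apply (IsCyclic.mulAutMulEquiv N).injective
    rw [map_one]
    exact h1
  have h3 : g * n * g⁻¹ = n := by
    have := MulAut.conjNormal_apply g (⟨n, hn⟩ : N)
    rw [h2] at this
    exact this.symm
  exact mul_inv_eq_iff_eq_mul.mp h3

/-- If `G''` and `G'/G''` are both cyclic, then `G'' = 1`: `G''` is central in `G'` with cyclic
quotient, so `G'` is abelian. -/
lemma derivedSeries_two_eq_bot_of_isCyclic {G : Type*} [Group G] [IsCyclic (derivedSeries G 2)]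
    [IsCyclic (derivedSeries G 1 ⧸ (derivedSeries G 2).subgroupOf (derivedSeries G 1))] :
    derivedSeries G 2 = ⊥ := by
  have hcomm := MonoidHom.isMulCommutative_of_isCyclic_of_ker_le_center
    (QuotientGroup.mk' ((derivedSeries G 2).subgroupOf (derivedSeries G 1))) (by
      rw [QuotientGroup.ker_mk']
      intro x hx
      rw [Subgroup.mem_center_iff]
      intro g
      apply Subtype.ext
      exact commute_of_mem_commutator_of_isCyclic (derivedSeries G 2)
        (by simpa only [derivedSeries_one] using g.2) (Subgroup.mem_subgroupOf.mp hx))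
  rw [derivedSeries_succ, eq_bot_iff, Subgroup.commutator_le]
  intro a ha b hb
  rw [Subgroup.mem_bot, commutatorElement_eq_one_iff_mul_comm]
  exact congrArg Subtype.val (hcomm.is_comm.comm ⟨a, ha⟩ ⟨b, hb⟩)

open ArithmeticFunction ArithmeticFunction.Omega in
lemma four_le_of_solvableGroupData {G : Type*} [Group G] {m : ℕ}
    (h : SolvableGroupData G 3 m) : 4 ≤ m := by
  obtain ⟨hfin, hsol, -, hne, rfl⟩ := h
  have : Group.IsSolvable G := hsol
  change derivedSeries G 2 ≠ ⊥ at hne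
  by_contra! hlt
  have hle : derivedSeries G 2 ≤ derivedSeries G 1 := derivedSeries_antitone G (by norm_num)
  have hne1 : derivedSeries G 1 ≠ ⊥ := fun h => hne (le_bot_iff.mp (h ▸ hle))
  have hlt2 : derivedSeries G 2 < derivedSeries G 1 := by
    rw [derivedSeries_succ]
    exact Group.IsSolvable.commutator_lt_of_ne_bot hne1
  have hnt : Nontrivial G := (Subgroup.ne_bot_iff_exists_ne_one.mp hne).elim
    fun a ha => ⟨a.1, 1, fun h => ha (Subtype.ext h)⟩
  have hlt1 : derivedSeries G 1 < ⊤ := by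
    rw [derivedSeries_one]
    exact Group.IsSolvable.commutator_lt_top_of_nontrivial G
  have hprod : Nat.card G = Nat.card (derivedSeries G 2) *
      ((derivedSeries G 2).relIndex (derivedSeries G 1) * (derivedSeries G 1).index) := by
    rw [Subgroup.relIndex_mul_index hle, Subgroup.card_mul_index]
  have pos : ∀ n : ℕ, n ≠ 0 → n ≠ 1 → 1 ≤ Ω n := fun n h0 h1 => by
    rw [Nat.one_le_iff_ne_zero, Ne, cardFactors_eq_zero_iff_eq_zero_or_one]
    tauto
  have a0 : Nat.card (derivedSeries G 2) ≠ 0 := Nat.card_pos.ne'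
  have b0 : (derivedSeries G 2).relIndex (derivedSeries G 1) ≠ 0 := Subgroup.index_ne_zero_of_finite
  have c0 : (derivedSeries G 1).index ≠ 0 := Subgroup.index_ne_zero_of_finite
  have a1 := pos _ a0 (fun h => hne (Subgroup.card_eq_one.mp h))
  have b1 := pos _ b0 (fun h => hlt2.not_ge (Subgroup.relIndex_eq_one.mp h))
  have c1 := pos _ c0 (fun h => hlt1.ne (Subgroup.index_eq_one.mp h))
  rw [← cardFactors_apply, hprod, cardFactors_mul a0 (mul_ne_zero b0 c0),
    cardFactors_mul b0 c0] at hlt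
  have pa : (Nat.card (derivedSeries G 2)).Prime := cardFactors_eq_one_iff_prime.mp (by omega)
  have pb : ((derivedSeries G 2).relIndex (derivedSeries G 1)).Prime :=
    cardFactors_eq_one_iff_prime.mp (by omega)
  have := Fact.mk pa
  have := Fact.mk pb
  have : IsCyclic (derivedSeries G 2) := isCyclic_of_prime_card rfl
  have : IsCyclic (derivedSeries G 1 ⧸ (derivedSeries G 2).subgroupOf (derivedSeries G 1)) :=
    isCyclic_of_prime_card (p := (derivedSeries G 2).relIndex (derivedSeries G 1)) rfl
  exact hne derivedSeries_two_eq_bot_of_isCyclic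

/-- The Klein four-group inside `S₄`, described as the set of even permutations of order dividing
two, that is, the identity and the double transpositions. -/
def kleinFourFin : Subgroup (Equiv.Perm (Fin 4)) where
  carrier := {s | Equiv.Perm.sign s = 1 ∧ s * s = 1}
  mul_mem' {a b} := by
    revert a b
    simp only [Set.mem_ofPred_eq]
    decide +kernel
  one_mem' := by simp
  inv_mem' {a} := by
    rintro ⟨h1, h2⟩
    rw [inv_eq_of_mul_eq_one_left h2]
    exact ⟨h1, h2⟩

lemma derivedSeries_one_perm_le :
    derivedSeries (Equiv.Perm (Fin 4)) 1 ≤ alternatingGroup (Fin 4) := by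
  rw [derivedSeries_one]
  exact Abelianization.commutator_subset_ker Equiv.Perm.sign

lemma derivedSeries_two_perm_le : derivedSeries (Equiv.Perm (Fin 4)) 2 ≤ kleinFourFin := by
  have key : ∀ a b : Equiv.Perm (Fin 4), Equiv.Perm.sign a = 1 → Equiv.Perm.sign b = 1 →
      (a * b * a⁻¹ * b⁻¹) * (a * b * a⁻¹ * b⁻¹) = 1 := by decide +kernel
  rw [derivedSeries_succ, Subgroup.commutator_le]
  intro a ha b hb
  have ha' := Equiv.Perm.mem_alternatingGroup.mp (derivedSeries_one_perm_le ha)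
  have hb' := Equiv.Perm.mem_alternatingGroup.mp (derivedSeries_one_perm_le hb)
  exact ⟨by simp [commutatorElement_def, ha', hb'], key a b ha' hb'⟩

lemma derivedSeries_three_perm : derivedSeries (Equiv.Perm (Fin 4)) 3 = ⊥ := by
  have key : ∀ a b : Equiv.Perm (Fin 4), (Equiv.Perm.sign a = 1 ∧ a * a = 1) →
      (Equiv.Perm.sign b = 1 ∧ b * b = 1) → a * b = b * a := by decide +kernel
  rw [derivedSeries_succ, eq_bot_iff, Subgroup.commutator_le]
  intro a ha b hb
  rw [Subgroup.mem_bot, commutatorElement_eq_one_iff_mul_comm]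
  exact key a b (derivedSeries_two_perm_le ha) (derivedSeries_two_perm_le hb)

open scoped commutatorElement in
lemma derivedSeries_two_perm_ne_bot : derivedSeries (Equiv.Perm (Fin 4)) 2 ≠ ⊥ := by
  have comm_mem : ∀ a b : Equiv.Perm (Fin 4), ⁅a, b⁆ ∈ derivedSeries (Equiv.Perm (Fin 4)) 1 :=
    fun a b => Subgroup.commutator_mem_commutator (Subgroup.mem_top a) (Subgroup.mem_top b)
  -- Commutators of overlapping transpositions are 3-cycles, and the two 3-cycles obtained here
  -- move different triples of points, so they do not commute.
  have hmem : ⁅⁅Equiv.swap (0 : Fin 4) 1, Equiv.swap (1 : Fin 4) 2⁆, ⁅Equiv.swap (0 : Fin 4) 1,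
      Equiv.swap (1 : Fin 4) 3⁆⁆ ∈ derivedSeries (Equiv.Perm (Fin 4)) 2 :=
    Subgroup.commutator_mem_commutator (comm_mem _ _) (comm_mem _ _)
  intro h
  rw [h, Subgroup.mem_bot, commutatorElement_eq_one_iff_mul_comm] at hmem
  simp only [commutatorElement_def] at hmem
  revert hmem
  decide +kernel

/-- Every finite solvable group of derived length exactly 3 has composition length
at least 4, and this bound is attained. -/
theorem cS_three_eq_four :
    (∀ (G : Type u) (inst : Group G) (m : ℕ), @SolvableGroupData G inst 3 m → 4 ≤ m) ∧
    (∃ (G : Type) (inst : Group G), @SolvableGroupData G inst 3 4) := by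
  refine ⟨fun G inst m h => four_le_of_solvableGroupData h, Equiv.Perm (Fin 4), inferInstance,
    inferInstance, ⟨⟨3, derivedSeries_three_perm⟩⟩, derivedSeries_three_perm,
    derivedSeries_two_perm_ne_bot, ?_⟩
  have hcard : Nat.card (Equiv.Perm (Fin 4)) = 2 ^ 3 * 3 := by
    rw [Nat.card_perm, Nat.card_fin]
    rfl
  rw [hcard, ← ArithmeticFunction.cardFactors_apply,
    ArithmeticFunction.cardFactors_mul (by norm_num) (by norm_num),
    ArithmeticFunction.cardFactors_apply_prime_pow Nat.prime_two,
    ArithmeticFunction.cardFactors_apply_prime Nat.prime_three]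
end

section
/- Every finite solvable group of derived length exactly 4 has composition length at least 5, and there exists a finite solvable group of derived length exactly 4 with composition length equal to 5. -/
open ArithmeticFunction ArithmeticFunction.Omega
open scoped commutatorElement

/-! ### Lower bound -/

/-- If `Q''` is cyclic then `Q` acts on it by conjugation through an abelian group, so `Q'`
centralizes `Q''`; as `Q'/Q''` is cyclic too, `Q'` is abelian and `Q''` is trivial. Only the case of
prime orders is stated. -/
theorem Aux.metacyclic {Q : Type*} [Group Q] [Finite Q]
    (h2 : (Nat.card (derivedSeries Q 2)).Prime)
    (h1 : ((derivedSeries Q 2).relIndex (derivedSeries Q 1)).Prime) : False := by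
  have := derivedSeries_normal Q 2
  have : Fact (Nat.card (derivedSeries Q 2)).Prime := ⟨h2⟩
  have : IsCyclic (derivedSeries Q 2) := isCyclic_of_prime_card rfl
  have hcent : ∀ a ∈ derivedSeries Q 1, ∀ n ∈ derivedSeries Q 2, a * n = n * a := by
    let e := IsCyclic.mulAutMulEquiv (derivedSeries Q 2)
    let φ : Q →* (ZMod (Nat.card (derivedSeries Q 2)))ˣ :=
      e.toMonoidHom.comp (MulAut.conjNormal (H := derivedSeries Q 2))
    intro a ha n hn
    have hker : a ∈ φ.ker := Abelianization.commutator_subset_ker φ ha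
    have h : MulAut.conjNormal (H := derivedSeries Q 2) a = 1 := by
      apply e.injective
      rw [map_one]
      exact hker
    have hval := congrArg (fun f => ((f ⟨n, hn⟩ : derivedSeries Q 2) : Q)) h
    simp only [MulAut.conjNormal_apply, MulAut.one_apply] at hval
    exact mul_inv_eq_iff_eq_mul.mp hval
  let N := (derivedSeries Q 2).subgroupOf (derivedSeries Q 1)
  have hN : (Nat.card (derivedSeries Q 1 ⧸ N)).Prime := h1
  have : Fact (Nat.card (derivedSeries Q 1 ⧸ N)).Prime := ⟨hN⟩
  have : IsCyclic (derivedSeries Q 1 ⧸ N) := isCyclic_of_prime_card rfl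
  have hcomm := (QuotientGroup.mk' N).isMulCommutative_of_isCyclic_of_ker_le_center (by
    rw [QuotientGroup.ker_mk']
    intro n hn
    rw [Subgroup.mem_center_iff]
    intro a
    exact Subtype.ext (hcent a a.2 n hn))
  have hbot : derivedSeries Q 2 = ⊥ := by
    rw [derivedSeries_succ, eq_bot_iff, Subgroup.commutator_le]
    intro a ha b hb
    rw [Subgroup.mem_bot, commutatorElement_eq_one_iff_mul_comm]
    exact congrArg Subtype.val (hcomm.is_comm.comm ⟨a, ha⟩ ⟨b, hb⟩)
  rw [hbot, Subgroup.card_bot] at h2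
  exact Nat.not_prime_one h2

/-- `Aux.metacyclic` applied to the quotient of `G` by its third derived subgroup. -/
theorem Aux.not_both_prime {G : Type*} [Group G] [Finite G]
    (h2 : ((derivedSeries G 3).relIndex (derivedSeries G 2)).Prime)
    (h1 : ((derivedSeries G 2).relIndex (derivedSeries G 1)).Prime) : False := by
  have := derivedSeries_normal G 3
  let π := QuotientGroup.mk' (derivedSeries G 3)
  have hπ : Function.Surjective π := QuotientGroup.mk'_surjective _
  have hker : π.ker = derivedSeries G 3 := QuotientGroup.ker_mk' _
  apply Aux.metacyclic (Q := G ⧸ derivedSeries G 3)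
  · rwa [← map_derivedSeries_eq hπ 2, ← Subgroup.relIndex_ker, hker]
  · rw [← map_derivedSeries_eq hπ 2, ← map_derivedSeries_eq hπ 1]
    rw [Subgroup.relIndex_map_map, hker]
    have h32 : derivedSeries G 3 ≤ derivedSeries G 2 := derivedSeries_antitone G (by norm_num)
    have h31 : derivedSeries G 3 ≤ derivedSeries G 1 := derivedSeries_antitone G (by norm_num)
    rwa [sup_eq_left.mpr h32, sup_eq_left.mpr h31]

theorem Aux.relIndex_ne_zero {G : Type*} [Group G] [Finite G] (H K : Subgroup G) :
    H.relIndex K ≠ 0 :=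
  ne_zero_of_dvd_ne_zero Nat.card_pos.ne' (H.relIndex_dvd_card K)

theorem Aux.step {G : Type*} [Group G] [Finite G] (k : ℕ) :
    Ω (Nat.card (derivedSeries G k)) = Ω (Nat.card (derivedSeries G (k + 1))) +
      Ω ((derivedSeries G (k + 1)).relIndex (derivedSeries G k)) := by
  rw [← cardFactors_mul Nat.card_pos.ne' (Aux.relIndex_ne_zero _ _),
    ← Subgroup.relIndex_bot_left, ← Subgroup.relIndex_bot_left,
    Subgroup.relIndex_mul_relIndex _ _ _ bot_le (derivedSeries_antitone G (Nat.le_succ k))]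

/-- In a solvable group the derived series descends strictly until it reaches the trivial group. -/
theorem Aux.ne_of_ne {G : Type*} [Group G] (hs : Group.IsSolvable G) {k l : ℕ} (hkl : k ≤ l)
    (h : derivedSeries G l ≠ ⊥) : ¬ derivedSeries G k ≤ derivedSeries G (k + 1) := by
  intro hle
  have heq := le_antisymm (derivedSeries_antitone G (Nat.le_succ k)) hle
  have hconst : ∀ j, derivedSeries G (k + j) = derivedSeries G k := by
    intro j
    induction j with
    | zero => rfl
    | succ j ih => rw [← add_assoc, derivedSeries_succ, ih, ← derivedSeries_succ, heq]
  obtain ⟨n, hn⟩ := hs.solvable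
  have := derivedSeries_antitone G (Nat.le_add_left n k)
  rw [hconst n, hn, le_bot_iff] at this
  have hval := derivedSeries_antitone G hkl
  rw [this, le_bot_iff] at hval
  exact h hval

theorem Aux.lower {G : Type*} [Group G] [Finite G] (hs : Group.IsSolvable G)
    (h : derivedSeries G 3 ≠ ⊥) : 5 ≤ Ω (Nat.card G) := by
  have hpos : ∀ k ≤ 3, 0 < Ω ((derivedSeries G (k + 1)).relIndex (derivedSeries G k)) := by
    intro k hk
    have h1 : (derivedSeries G (k + 1)).relIndex (derivedSeries G k) ≠ 1 := by
      rw [Ne, Subgroup.relIndex_eq_one]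
      exact Aux.ne_of_ne hs hk h
    have h0 : (derivedSeries G (k + 1)).relIndex (derivedSeries G k) ≠ 0 :=
      Aux.relIndex_ne_zero _ _
    rw [cardFactors_pos_iff_one_lt]
    omega
  have s0 := Aux.step (G := G) 0
  have s1 := Aux.step (G := G) 1
  have s2 := Aux.step (G := G) 2
  have s3 := Aux.step (G := G) 3
  rw [derivedSeries_zero, Subgroup.card_top] at s0
  have p0 := hpos 0 (by norm_num)
  have p1 := hpos 1 (by norm_num)
  have p2 := hpos 2 (by norm_num)
  have p3 := hpos 3 (by norm_num)
  norm_num only at s0 s1 s2 s3 p0 p1 p2 p3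
  rw [derivedSeries_zero] at p0
  by_contra hlt
  exact Aux.not_both_prime (G := G) (cardFactors_eq_one_iff_prime.mp (by omega))
    (cardFactors_eq_one_iff_prime.mp (by omega))

/-! ### The group GL(2, 3) -/

open Matrix in
theorem Aux.inv_val (g : GL (Fin 2) (ZMod 3)) (hg : g.val.det = 1) :
    (g⁻¹).val = !![g.val 1 1, -g.val 0 1; -g.val 1 0, g.val 0 0] := by
  rw [Matrix.coe_units_inv, Matrix.inv_def, hg, Ring.inverse_one, one_smul, adjugate_fin_two]

/-- The matrix `!![a, b; c, d]` lies in the quaternion subgroup of `SL(2, 3)`: it has determinant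
one and is traceless (order 4) or diagonal (hence `1` or `-1`). -/
def Aux.IsQuat (a b c d : ZMod 3) : Prop := a * d - b * c = 1 ∧ (a + d = 0 ∨ (b = 0 ∧ c = 0))

instance (a b c d : ZMod 3) : Decidable (Aux.IsQuat a b c d) := by
  unfold Aux.IsQuat; infer_instance

theorem Aux.isQuat_mul : ∀ a b c d : ZMod 3, Aux.IsQuat a b c d →
    ∀ e f g k : ZMod 3, Aux.IsQuat e f g k →
    Aux.IsQuat (a * e + b * g) (a * f + b * k) (c * e + d * g) (c * f + d * k) := by
  decide +kernel

/-- The quaternion subgroup of `GL(2, 3)`. -/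
def Aux.quat : Subgroup (GL (Fin 2) (ZMod 3)) where
  carrier := {g | Aux.IsQuat (g.val 0 0) (g.val 0 1) (g.val 1 0) (g.val 1 1)}
  one_mem' := by
    simp [Aux.IsQuat]
  mul_mem' := by
    intro x y hx hy
    have := Aux.isQuat_mul _ _ _ _ hx _ _ _ _ hy
    simpa [Matrix.mul_apply, Fin.sum_univ_two] using this
  inv_mem' := by
    intro x hx
    obtain ⟨h1, h2⟩ := hx
    rw [Set.mem_ofPred_eq, Aux.inv_val x (by rw [Matrix.det_fin_two, h1])]
    refine ⟨by simpa [mul_comm] using h1, ?_⟩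
    simpa [add_comm] using h2

/-- The commutator of the determinant-one matrices `!![a, b; c, d]` and `!![e, f; g, k]`, with
their inverses written as adjugates. -/
def Aux.comm (a b c d e f g k : ZMod 3) : Matrix (Fin 2) (Fin 2) (ZMod 3) :=
  !![a, b; c, d] * !![e, f; g, k] * !![d, -b; -c, a] * !![k, -f; -g, e]

theorem Aux.comm_eq {x y : GL (Fin 2) (ZMod 3)} (hx : x.val.det = 1) (hy : y.val.det = 1) :
    (⁅x, y⁆).val = Aux.comm (x.val 0 0) (x.val 0 1) (x.val 1 0) (x.val 1 1)
      (y.val 0 0) (y.val 0 1) (y.val 1 0) (y.val 1 1) := by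
  rw [commutatorElement_def, Units.val_mul, Units.val_mul, Units.val_mul, Aux.inv_val x hx,
    Aux.inv_val y hy, Aux.comm, ← Matrix.eta_fin_two, ← Matrix.eta_fin_two]

/-- The commutator of two elements of `SL(2, 3)` satisfies the trace-or-diagonal condition of
`Aux.IsQuat`. -/
theorem Aux.comm_entries : ∀ a b c d : ZMod 3, a * d - b * c = 1 →
    ∀ e f g k : ZMod 3, e * k - f * g = 1 →
    Aux.comm a b c d e f g k 0 0 + Aux.comm a b c d e f g k 1 1 = 0 ∨
    (Aux.comm a b c d e f g k 0 1 = 0 ∧ Aux.comm a b c d e f g k 1 0 = 0) := by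
  decide +kernel

/-- The commutator of two quaternion matrices is scalar. -/
theorem Aux.quat_comm : ∀ a b c d : ZMod 3, Aux.IsQuat a b c d →
    ∀ e f g k : ZMod 3, Aux.IsQuat e f g k →
    Aux.comm a b c d e f g k 0 0 = Aux.comm a b c d e f g k 1 1 ∧
    Aux.comm a b c d e f g k 0 1 = 0 ∧ Aux.comm a b c d e f g k 1 0 = 0 := by
  decide +kernel

theorem Aux.d1 : derivedSeries (GL (Fin 2) (ZMod 3)) 1 ≤ Matrix.GeneralLinearGroup.det.ker :=
  Abelianization.commutator_subset_ker _

theorem Aux.det_of_mem {x : GL (Fin 2) (ZMod 3)}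
    (hx : x ∈ (Matrix.GeneralLinearGroup.det (n := Fin 2) (R := ZMod 3)).ker) :
    x.val.det = 1 := congrArg Units.val hx

theorem Aux.d2 : derivedSeries (GL (Fin 2) (ZMod 3)) 2 ≤ Aux.quat := by
  rw [derivedSeries_succ, Subgroup.commutator_le]
  intro x hx y hy
  have dx := Aux.det_of_mem (Aux.d1 hx)
  have dy := Aux.det_of_mem (Aux.d1 hy)
  have hd : (⁅x, y⁆).val.det = 1 := Aux.det_of_mem (Aux.d1
    (Subgroup.commutator_le_self _ (Subgroup.commutator_mem_commutator hx hy)))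
  rw [Matrix.det_fin_two] at hd
  refine ⟨hd, ?_⟩
  rw [Aux.comm_eq dx dy]
  exact Aux.comm_entries _ _ _ _ ((Matrix.det_fin_two _).symm.trans dx) _ _ _ _
    ((Matrix.det_fin_two _).symm.trans dy)

theorem Aux.d3 :
    derivedSeries (GL (Fin 2) (ZMod 3)) 3 ≤ Subgroup.center (GL (Fin 2) (ZMod 3)) := by
  rw [derivedSeries_succ, Subgroup.commutator_le]
  intro x hx y hy
  have hx := Aux.d2 hx
  have hy := Aux.d2 hy
  have dx : x.val.det = 1 := (Matrix.det_fin_two _).trans hx.1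
  have dy : y.val.det = 1 := (Matrix.det_fin_two _).trans hy.1
  have key : (⁅x, y⁆).val 0 0 = (⁅x, y⁆).val 1 1 ∧ (⁅x, y⁆).val 0 1 = 0 ∧
      (⁅x, y⁆).val 1 0 = 0 := by
    rw [Aux.comm_eq dx dy]
    exact Aux.quat_comm _ _ _ _ hx _ _ _ _ hy
  generalize ⁅x, y⁆ = z at key
  obtain ⟨h1, h2, h3⟩ := key
  rw [Subgroup.mem_center_iff]
  intro g
  ext i j
  fin_cases i <;> fin_cases j <;>
    simp [Matrix.mul_apply, Fin.sum_univ_two, h1, h2, h3, mul_comm]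

theorem Aux.d4 : derivedSeries (GL (Fin 2) (ZMod 3)) 4 = ⊥ := by
  rw [derivedSeries_succ, Subgroup.commutator_eq_bot_iff_le_centralizer]
  exact Aux.d3.trans (Subgroup.center_le_centralizer _)

/-- A reflection, used to exhibit transvections as commutators. -/
def Aux.s : GL (Fin 2) (ZMod 3) := ⟨!![2, 0; 0, 1], !![2, 0; 0, 1], by decide, by decide⟩
/-- The upper unitriangular transvection. -/
def Aux.t : GL (Fin 2) (ZMod 3) := ⟨!![1, 1; 0, 1], !![1, 2; 0, 1], by decide, by decide⟩
/-- The lower unitriangular transvection. -/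
def Aux.u : GL (Fin 2) (ZMod 3) := ⟨!![1, 0; 1, 1], !![1, 0; 2, 1], by decide, by decide⟩

/-- The transvections `t`, `u` are commutators; `q = ⁅t, u⁆` lies in the second derived subgroup
and does not commute with its conjugate `t * q * t⁻¹`. -/
theorem Aux.d3_ne : derivedSeries (GL (Fin 2) (ZMod 3)) 3 ≠ ⊥ := by
  have ht : Aux.t ∈ derivedSeries (GL (Fin 2) (ZMod 3)) 1 := by
    have h : ⁅Aux.s, Aux.t⁆ = Aux.t := Units.ext (by decide +kernel)
    rw [← h]
    exact Subgroup.commutator_mem_commutator (Subgroup.mem_top _) (Subgroup.mem_top _)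
  have hu : Aux.u ∈ derivedSeries (GL (Fin 2) (ZMod 3)) 1 := by
    have h : ⁅Aux.s, Aux.u⁆ = Aux.u := Units.ext (by decide +kernel)
    rw [← h]
    exact Subgroup.commutator_mem_commutator (Subgroup.mem_top _) (Subgroup.mem_top _)
  have hq : ⁅Aux.t, Aux.u⁆ ∈ derivedSeries (GL (Fin 2) (ZMod 3)) 2 :=
    Subgroup.commutator_mem_commutator ht hu
  have hr := (derivedSeries_normal (GL (Fin 2) (ZMod 3)) 2).conj_mem _ hq Aux.t
  have hz : ⁅⁅Aux.t, Aux.u⁆, Aux.t * ⁅Aux.t, Aux.u⁆ * Aux.t⁻¹⁆ ∈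
      derivedSeries (GL (Fin 2) (ZMod 3)) 3 :=
    Subgroup.commutator_mem_commutator hq hr
  intro h
  rw [h, Subgroup.mem_bot] at hz
  exact absurd (congrArg Units.val hz) (by decide +kernel)

theorem Aux.card : Nat.card (GL (Fin 2) (ZMod 3)) = 48 := by
  rw [Matrix.card_GL_field]
  simp [Fin.prod_univ_two, ZMod.card]

/-- Every finite solvable group of derived length exactly 4 has composition length
at least 5, and this bound is attained. -/
theorem cS_four_eq_five :
    (∀ (G : Type u) (inst : Group G) (m : ℕ), @SolvableGroupData G inst 4 m → 5 ≤ m) ∧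
    (∃ (G : Type) (inst : Group G), @SolvableGroupData G inst 4 5) := by
  refine ⟨?_, GL (Fin 2) (ZMod 3), inferInstance, ?_⟩
  · rintro G inst m ⟨hfin, hs, -, h3, rfl⟩
    exact cardFactors_apply ▸ Aux.lower hs h3
  · refine ⟨inferInstance, ⟨⟨4, Aux.d4⟩⟩, Aux.d4, Aux.d3_ne, ?_⟩
    rw [Aux.card, ← cardFactors_apply, show 48 = 2 ^ 4 * 3 by norm_num,
      cardFactors_mul (by norm_num) (by norm_num), cardFactors_apply_prime_pow Nat.prime_two,
      cardFactors_apply_prime Nat.prime_three]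
end

section
/- Every finite solvable group of derived length exactly 6 has composition length at least 8, and there exists a finite solvable group of derived length exactly 6 with composition length equal to 8. -/
open scoped commutatorElement

/-! ### Consecutive cyclic factors of the derived series -/

/-- The case where `Q⁽ⁱ⁺³⁾` is trivial, which is automatic for cyclic `Q⁽ⁱ⁺²⁾`. The prime index
serves to make `Q⁽ⁱ⁺¹⁾/Q⁽ⁱ⁺²⁾` cyclic. -/
theorem derivedSeries_eq_bot_of_cyclic {Q : Type*} [Group Q] (i : ℕ)
    (hB : IsCyclic (derivedSeries Q (i + 2)))
    (hp : ((derivedSeries Q (i + 2)).relIndex (derivedSeries Q (i + 1))).Prime) :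
    derivedSeries Q (i + 2) = ⊥ := by
  set A := derivedSeries Q (i + 1) with hA
  set B := derivedSeries Q (i + 2) with hBdef
  have hBn : B.Normal := derivedSeries_normal Q (i + 2)
  -- `Aut B` is abelian, so the conjugation action of `Q` on `B` kills `Q' ≥ A`.
  have hker : A ≤ (MulAut.conjNormal (H := B)).ker := by
    have h1 : A ≤ derivedSeries Q 1 := derivedSeries_antitone Q (by omega)
    refine h1.trans ?_
    rw [derivedSeries_one, commutator_def, Subgroup.commutator_le]
    intro x _ y _
    rw [MonoidHom.mem_ker, map_commutatorElement, commutatorElement_eq_one_iff_mul_comm]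
    obtain ⟨g, hg⟩ := hB.exists_generator
    have hgen : ∀ σ : MulAut B, ∃ k : ℤ, ∀ b, σ b = b ^ k := by
      intro σ
      obtain ⟨k, hk⟩ := Subgroup.mem_zpowers_iff.1 (hg (σ g))
      refine ⟨k, fun b => ?_⟩
      obtain ⟨l, rfl⟩ := Subgroup.mem_zpowers_iff.1 (hg b)
      rw [map_zpow, ← hk, ← zpow_mul, ← zpow_mul, mul_comm]
    obtain ⟨k, hk⟩ := hgen (MulAut.conjNormal x)
    obtain ⟨l, hl⟩ := hgen (MulAut.conjNormal y)
    ext b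
    simp only [MulAut.mul_apply, hk, hl, ← zpow_mul, mul_comm]
  have hcomm : ∀ a ∈ A, ∀ b ∈ B, a * b = b * a := by
    intro a ha b hb
    have h := hker ha
    rw [MonoidHom.mem_ker] at h
    have h2 := congrArg Subtype.val (DFunLike.congr_fun h (⟨b, hb⟩ : B))
    rw [MulAut.conjNormal_apply] at h2
    simpa [mul_inv_eq_iff_eq_mul] using h2
  have hcard : Nat.card (A ⧸ B.subgroupOf A) = B.relIndex A := rfl
  have hcyc : IsCyclic (A ⧸ B.subgroupOf A) := by
    have := Fact.mk hp
    exact isCyclic_of_prime_card hcard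
  -- `A` is central-by-cyclic, hence abelian.
  have hAcomm : IsMulCommutative A := by
    refine MonoidHom.isMulCommutative_of_isCyclic_of_ker_le_center
      (QuotientGroup.mk' (B.subgroupOf A)) ?_
    rw [QuotientGroup.ker_mk']
    intro x hx
    rw [Subgroup.mem_center_iff]
    intro y
    exact Subtype.ext (hcomm y y.2 x (Subgroup.mem_subgroupOf.1 hx))
  rw [hBdef, derivedSeries_succ, Subgroup.commutator_eq_bot_iff_le_centralizer]
  intro x hx
  rw [Subgroup.mem_centralizer_iff]
  intro y hy
  exact congrArg Subtype.val (hAcomm.is_comm.comm ⟨y, hy⟩ ⟨x, hx⟩)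

/-- The case of arbitrary `G⁽ⁱ⁺³⁾`, by passage to the quotient `G/G⁽ⁱ⁺³⁾`. -/
theorem derivedSeries_eq_of_prime_relIndex {G : Type*} [Group G] (i : ℕ)
    (hp : ((derivedSeries G (i + 2)).relIndex (derivedSeries G (i + 1))).Prime)
    (hq : ((derivedSeries G (i + 3)).relIndex (derivedSeries G (i + 2))).Prime) :
    derivedSeries G (i + 2) ≤ derivedSeries G (i + 3) := by
  set C := derivedSeries G (i + 3) with hC
  have hCn : C.Normal := derivedSeries_normal G (i + 3)
  let π := QuotientGroup.mk' C
  have hπ : Function.Surjective π := QuotientGroup.mk'_surjective C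
  have hmap : ∀ k, (derivedSeries G k).map π = derivedSeries (G ⧸ C) k :=
    fun k => map_derivedSeries_eq hπ k
  have hle : ∀ j k, j ≤ k → derivedSeries G k ≤ derivedSeries G j :=
    fun j k h => derivedSeries_antitone G h
  have hkerπ : π.ker = C := QuotientGroup.ker_mk' C
  have hcardB : Nat.card (derivedSeries (G ⧸ C) (i + 2)) = C.relIndex (derivedSeries G (i + 2)) := by
    rw [← hmap, ← Subgroup.relIndex_ker, hkerπ]
  have hidx : (derivedSeries (G ⧸ C) (i + 2)).relIndex (derivedSeries (G ⧸ C) (i + 1)) =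
      (derivedSeries G (i + 2)).relIndex (derivedSeries G (i + 1)) := by
    rw [← hmap, ← hmap, Subgroup.relIndex_map_map, hkerπ,
      sup_eq_left.2 (hle _ _ (by omega)), sup_eq_left.2 (hle _ _ (by omega))]
  have hbot : derivedSeries (G ⧸ C) (i + 2) = ⊥ := by
    refine derivedSeries_eq_bot_of_cyclic i ?_ (hidx ▸ hp)
    have := Fact.mk hq
    exact isCyclic_of_prime_card hcardB
  rw [← hmap, Subgroup.map_eq_bot_iff, hkerπ] at hbot
  exact hbot

/-! ### Counting prime factors along the derived series -/

/-- `Ω(|G⁽ᵏ⁾|)`, the composition length of the `k`-th derived subgroup when `G` is finite and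
solvable. -/
noncomputable def derivedOmega (G : Type*) [Group G] (k : ℕ) : ℕ :=
  ArithmeticFunction.cardFactors (Nat.card (derivedSeries G k))

theorem derivedOmega_succ (G : Type*) [Group G] [Finite G] (k : ℕ) :
    derivedOmega G k = derivedOmega G (k + 1) + ArithmeticFunction.cardFactors
      ((derivedSeries G (k + 1)).relIndex (derivedSeries G k)) := by
  have hle : derivedSeries G (k + 1) ≤ derivedSeries G k := derivedSeries_antitone G (by omega)
  have hmul := Subgroup.relIndex_mul_relIndex ⊥ _ _ bot_le hle
  rw [Subgroup.relIndex_bot_left, Subgroup.relIndex_bot_left] at hmul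
  unfold derivedOmega
  rw [← hmul]
  exact ArithmeticFunction.cardFactors_mul Nat.card_pos.ne' Subgroup.FiniteIndex.index_ne_zero

theorem derivedSeries_not_le_succ {G : Type*} [Group G] [Group.IsSolvable G] {k : ℕ}
    (h : derivedSeries G k ≠ ⊥) : ¬ derivedSeries G k ≤ derivedSeries G (k + 1) := by
  intro hle
  have hstab : ∀ n, derivedSeries G k ≤ derivedSeries G (k + n) := by
    intro n
    induction n with
    | zero => exact le_rfl
    | succ n ih =>
      refine hle.trans ?_
      rw [← add_assoc, derivedSeries_succ, derivedSeries_succ]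
      exact Subgroup.commutator_mono ih ih
  obtain ⟨n, hn⟩ := (Group.isSolvable_def G).1 inferInstance
  refine h (le_bot_iff.1 ((hstab n).trans ?_))
  rw [← hn]
  exact derivedSeries_antitone G (by omega)

theorem Omega_relIndex_pos {G : Type*} [Group G] [Finite G] [Group.IsSolvable G] {k : ℕ}
    (h : derivedSeries G k ≠ ⊥) :
    1 ≤ ArithmeticFunction.cardFactors
      ((derivedSeries G (k + 1)).relIndex (derivedSeries G k)) := by
  have h1 : (derivedSeries G (k + 1)).relIndex (derivedSeries G k) ≠ 1 := by
    rw [Ne, Subgroup.relIndex_eq_one]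
    exact derivedSeries_not_le_succ h
  have h0 : (derivedSeries G (k + 1)).relIndex (derivedSeries G k) ≠ 0 :=
    Subgroup.FiniteIndex.index_ne_zero
  rw [Nat.one_le_iff_ne_zero, Ne, ArithmeticFunction.cardFactors_eq_zero_iff_eq_zero_or_one]
  tauto

theorem Omega_drop_one {G : Type*} [Group G] [Finite G] [Group.IsSolvable G] {k : ℕ}
    (h : derivedSeries G k ≠ ⊥) : derivedOmega G (k + 1) + 1 ≤ derivedOmega G k := by
  have := Omega_relIndex_pos h
  have := derivedOmega_succ G k
  omega

theorem Omega_drop_three {G : Type*} [Group G] [Finite G] [Group.IsSolvable G] {k : ℕ}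
    (h : derivedSeries G (k + 2) ≠ ⊥) : derivedOmega G (k + 3) + 3 ≤ derivedOmega G (k + 1) := by
  have h' : derivedSeries G (k + 1) ≠ ⊥ := fun h1 =>
    h (le_bot_iff.1 (h1 ▸ derivedSeries_antitone G (by omega)))
  have e1 := derivedOmega_succ G (k + 1)
  have e2 := derivedOmega_succ G (k + 2)
  have p1 := Omega_relIndex_pos h'
  have p2 := Omega_relIndex_pos h
  rw [show k + 1 + 1 = k + 2 from rfl] at e1 p1
  rw [show k + 2 + 1 = k + 3 from rfl] at e2 p2
  by_contra hlt
  refine derivedSeries_not_le_succ h (derivedSeries_eq_of_prime_relIndex k ?_ ?_)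
  · exact ArithmeticFunction.cardFactors_eq_one_iff_prime.1 (by omega)
  · exact ArithmeticFunction.cardFactors_eq_one_iff_prime.1 (by omega)

theorem derivedOmega_zero (G : Type*) [Group G] :
    derivedOmega G 0 = (Nat.card G).primeFactorsList.length := by
  rw [derivedOmega, derivedSeries_zero, Subgroup.card_top, ArithmeticFunction.cardFactors_apply]

theorem derivedSeries_ne_bot_of_le {G : Type*} [Group G] {j k : ℕ} (hjk : j ≤ k)
    (h : derivedSeries G k ≠ ⊥) : derivedSeries G j ≠ ⊥ := fun h1 =>
  h (le_bot_iff.1 (h1 ▸ derivedSeries_antitone G hjk))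

theorem eight_le_Omega {G : Type*} [Group G] [Finite G] [Group.IsSolvable G]
    (h : derivedSeries G 5 ≠ ⊥) : 8 ≤ (Nat.card G).primeFactorsList.length := by
  have h0 := Omega_drop_one (derivedSeries_ne_bot_of_le (show 0 ≤ 5 by omega) h)
  have h1 := Omega_drop_three (derivedSeries_ne_bot_of_le (show 0 + 2 ≤ 5 by omega) h)
  have h3 := Omega_drop_three (derivedSeries_ne_bot_of_le (show 2 + 2 ≤ 5 by omega) h)
  have h5 := Omega_drop_one h
  rw [← derivedOmega_zero]
  norm_num at h0 h1 h3 h5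
  omega

theorem nine_le_Omega {G : Type*} [Group G] [Finite G] [Group.IsSolvable G]
    (h : derivedSeries G 6 ≠ ⊥) : 9 ≤ (Nat.card G).primeFactorsList.length := by
  have h0 := Omega_drop_one (derivedSeries_ne_bot_of_le (show 0 ≤ 6 by omega) h)
  have h1 := Omega_drop_three (derivedSeries_ne_bot_of_le (show 0 + 2 ≤ 6 by omega) h)
  have h3 := Omega_drop_three (derivedSeries_ne_bot_of_le (show 2 + 2 ≤ 6 by omega) h)
  have h5 := Omega_drop_one (derivedSeries_ne_bot_of_le (show 5 ≤ 6 by omega) h)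
  have h6 := Omega_drop_one h
  rw [← derivedOmega_zero]
  norm_num at h0 h1 h3 h5 h6
  omega

/-! ### The Heisenberg group of order 27 and the action of `GL₂(𝔽₃)` -/

/-- The Heisenberg group over `𝔽₃` in symmetric form: `(v, s)(w, t) = (v + w, s + t + ω(v, w))`
for the symplectic form `ω` on `𝔽₃²`. A matrix `A` then acts by `(v, s) ↦ (A v, det A • s)`. -/
@[ext]
structure Heis where
  /-- First coordinate of the image in `𝔽₃²`. -/
  x : ZMod 3
  /-- Second coordinate of the image in `𝔽₃²`. -/
  y : ZMod 3
  /-- Central coordinate. -/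
  z : ZMod 3

namespace Heis

instance : Mul Heis := ⟨fun a b => ⟨a.x + b.x, a.y + b.y, a.z + b.z + (a.x * b.y - a.y * b.x)⟩⟩
instance : One Heis := ⟨⟨0, 0, 0⟩⟩
instance : Inv Heis := ⟨fun a => ⟨-a.x, -a.y, -a.z⟩⟩

@[simp] theorem mul_x (a b : Heis) : (a * b).x = a.x + b.x := rfl
@[simp] theorem mul_y (a b : Heis) : (a * b).y = a.y + b.y := rfl
@[simp] theorem mul_z (a b : Heis) : (a * b).z = a.z + b.z + (a.x * b.y - a.y * b.x) := rfl
@[simp] theorem one_x : (1 : Heis).x = 0 := rfl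
@[simp] theorem one_y : (1 : Heis).y = 0 := rfl
@[simp] theorem one_z : (1 : Heis).z = 0 := rfl
@[simp] theorem inv_x (a : Heis) : (a⁻¹).x = -a.x := rfl
@[simp] theorem inv_y (a : Heis) : (a⁻¹).y = -a.y := rfl
@[simp] theorem inv_z (a : Heis) : (a⁻¹).z = -a.z := rfl

instance : Group Heis :=
  Group.ofLeftAxioms
    (by intro a b c; ext <;> simp <;> ring)
    (by intro a; ext <;> simp)
    (by intro a; ext <;> simp; ring)

/-- The underlying set of `Heis` is `𝔽₃³`. -/
def equivProd : Heis ≃ ZMod 3 × ZMod 3 × ZMod 3 where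
  toFun a := (a.x, a.y, a.z)
  invFun p := ⟨p.1, p.2.1, p.2.2⟩
  left_inv _ := rfl
  right_inv _ := rfl

instance : Finite Heis := Finite.of_equiv _ equivProd.symm

theorem card_eq : Nat.card Heis = 27 := by
  rw [Nat.card_congr equivProd]
  simp

instance : Group.IsSolvable Heis := by
  have : Fact (Nat.Prime 3) := ⟨by norm_num⟩
  have : Group.IsNilpotent Heis :=
    (IsPGroup.of_card (p := 3) (n := 3) (by rw [card_eq]; norm_num)).isNilpotent
  infer_instance

end Heis

/-- The group `GL₂(𝔽₃)`. -/
abbrev GL23 : Type := Matrix.GeneralLinearGroup (Fin 2) (ZMod 3)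

instance fact_prime_three : Fact (Nat.Prime 3) := ⟨by norm_num⟩

/-- The map `(v, s) ↦ (A v, det A • s)` on `Heis`. -/
def heisAct (A : Matrix (Fin 2) (Fin 2) (ZMod 3)) (h : Heis) : Heis :=
  ⟨A 0 0 * h.x + A 0 1 * h.y, A 1 0 * h.x + A 1 1 * h.y, (A 0 0 * A 1 1 - A 0 1 * A 1 0) * h.z⟩

theorem heisAct_mul (A B : Matrix (Fin 2) (Fin 2) (ZMod 3)) (h : Heis) :
    heisAct (A * B) h = heisAct A (heisAct B h) := by
  ext <;> simp [heisAct, Matrix.mul_apply, Fin.sum_univ_two] <;> ring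

theorem heisAct_one (h : Heis) : heisAct 1 h = h := by
  ext <;> simp [heisAct]

theorem heisAct_map_mul (A : Matrix (Fin 2) (Fin 2) (ZMod 3)) (h k : Heis) :
    heisAct A (h * k) = heisAct A h * heisAct A k := by
  ext <;> simp [heisAct] <;> ring

/-- `GL₂(𝔽₃)` acting on the Heisenberg group by automorphisms. -/
def heisHom : GL23 →* MulAut Heis where
  toFun A :=
    { toFun := heisAct A.1
      invFun := heisAct (A⁻¹).1
      left_inv := fun h => by rw [← heisAct_mul, ← Units.val_mul, inv_mul_cancel, Units.val_one,
        heisAct_one]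
      right_inv := fun h => by rw [← heisAct_mul, ← Units.val_mul, mul_inv_cancel, Units.val_one,
        heisAct_one]
      map_mul' := heisAct_map_mul A.1 }
  map_one' := by ext1 h; exact heisAct_one h
  map_mul' A B := by ext1 h; exact heisAct_mul A.1 B.1 h

/-! ### Solvability of `GL₂(𝔽₃)` -/

theorem card_GL23 : Nat.card GL23 = 48 := by
  rw [Matrix.card_GL_field]
  simp [Fin.prod_univ_two, ZMod.card]

/-- The kernel of the determinant on `GL₂(𝔽₃)`. -/
abbrev SL23 : Subgroup GL23 := (Matrix.GeneralLinearGroup.det (n := Fin 2) (R := ZMod 3)).ker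

/-- The formula for a homomorphism `SL₂(𝔽₃) → ℤ/3` in terms of matrix entries; it is the reduction
mod `3` of the abelianization `SL₂(ℤ) → ℤ/12`. -/
def chi (a b c d : ZMod 3) : ZMod 3 := b * d * (1 - c ^ 2) + c * (a + d)

theorem chi_mul : ∀ a b c d : ZMod 3, a * d - b * c = 1 → ∀ e f g h : ZMod 3, e * h - f * g = 1 →
    chi (a * e + b * g) (a * f + b * h) (c * e + d * g) (c * f + d * h) =
      chi a b c d + chi e f g h := by
  decide +kernel

theorem SL23_det (A : SL23) : A.1.1 0 0 * A.1.1 1 1 - A.1.1 0 1 * A.1.1 1 0 = 1 := by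
  have h := congrArg Units.val (MonoidHom.mem_ker.1 A.2)
  rw [Matrix.GeneralLinearGroup.val_det_apply, Matrix.det_fin_two] at h
  exact h

/-- The homomorphism `SL₂(𝔽₃) → ℤ/3`. -/
def chiHom : SL23 →* Multiplicative (ZMod 3) :=
  MonoidHom.mk' (fun A => Multiplicative.ofAdd
    (chi (A.1.1 0 0) (A.1.1 0 1) (A.1.1 1 0) (A.1.1 1 1))) (by
    intro A B
    rw [← ofAdd_add, ← chi_mul _ _ _ _ (SL23_det A) _ _ _ _ (SL23_det B)]
    simp [Matrix.mul_apply, Fin.sum_univ_two])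

/-- `diag(1, -1)`. -/
def matS : GL23 := ⟨!![1, 0; 0, 2], !![1, 0; 0, 2], by decide, by decide⟩

/-- The upper elementary matrix. -/
def matU : GL23 := ⟨!![1, 1; 0, 1], !![1, 2; 0, 1], by decide, by decide⟩

/-- The lower elementary matrix. -/
def matL : GL23 := ⟨!![1, 0; 1, 1], !![1, 0; 2, 1], by decide, by decide⟩

theorem card_SL23 : Nat.card SL23 = 24 := by
  have h := Subgroup.card_mul_index SL23
  rw [Subgroup.index_ker, card_GL23] at h
  have hs : Function.Surjective (Matrix.GeneralLinearGroup.det (n := Fin 2) (R := ZMod 3)) := by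
    have h2 : ∀ u : (ZMod 3)ˣ, u = 1 ∨ u = Matrix.GeneralLinearGroup.det matS := by
      decide
    intro u
    rcases h2 u with rfl | rfl
    · exact ⟨1, map_one _⟩
    · exact ⟨matS, rfl⟩
  rw [MonoidHom.range_eq_top.2 hs, Subgroup.card_top,
    Nat.card_eq_fintype_card (α := (ZMod 3)ˣ), ZMod.card_units] at h
  omega

theorem matU_mem : matU ∈ SL23 := by
  rw [MonoidHom.mem_ker]
  decide

theorem card_chiHom_ker : Nat.card chiHom.ker = 8 := by
  have h := Subgroup.card_mul_index chiHom.ker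
  rw [Subgroup.index_ker, card_SL23] at h
  have hs : chiHom.range = ⊤ := by
    have hne : chiHom ⟨matU, matU_mem⟩ ≠ 1 := by decide
    have hprime : (Nat.card (Multiplicative (ZMod 3))).Prime := by
      rw [Nat.card_congr Multiplicative.toAdd, Nat.card_zmod]; norm_num
    have := Fact.mk hprime
    rcases Subgroup.eq_bot_or_eq_top_of_prime_card chiHom.range with hb | ht
    · exact absurd ((Subgroup.eq_bot_iff_forall _).1 hb _ ⟨_, rfl⟩) hne
    · exact ht
  rw [hs, Subgroup.card_top, Nat.card_congr Multiplicative.toAdd, Nat.card_zmod] at h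
  omega

instance : Group.IsSolvable SL23 := by
  have : Fact (Nat.Prime 2) := ⟨Nat.prime_two⟩
  have : Group.IsNilpotent chiHom.ker :=
    (IsPGroup.of_card (p := 2) (n := 3) (by rw [card_chiHom_ker]; norm_num)).isNilpotent
  exact Group.isSolvable_of_ker_le_range chiHom.ker.subtype chiHom (by rw [Subgroup.range_subtype])

instance : Group.IsSolvable GL23 :=
  Group.isSolvable_of_ker_le_range SL23.subtype (Matrix.GeneralLinearGroup.det (n := Fin 2) (R := ZMod 3))
    (by rw [Subgroup.range_subtype])

/-! ### The semidirect product of order 1296 -/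

/-- The group `3^{1+2} ⋊ GL₂(𝔽₃)` of order `1296`. -/
abbrev ExampleGroup : Type := Heis ⋊[heisHom] GL23

theorem card_exampleGroup : Nat.card ExampleGroup = 1296 := by
  rw [SemidirectProduct.card, Heis.card_eq, card_GL23]

instance : Finite ExampleGroup :=
  Nat.finite_of_card_ne_zero (by rw [card_exampleGroup]; norm_num)

instance : Group.IsSolvable ExampleGroup :=
  Group.isSolvable_of_ker_le_range (SemidirectProduct.inl) (SemidirectProduct.rightHom (φ := heisHom))
    (by rw [SemidirectProduct.range_inl_eq_ker_rightHom])

theorem mem_derivedSeries_succ {G : Type*} [Group G] {k : ℕ} {a b c : G}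
    (ha : a ∈ derivedSeries G k) (hb : b ∈ derivedSeries G k) (h : a * b = c * (b * a)) :
    c ∈ derivedSeries G (k + 1) := by
  have hc : c = ⁅a, b⁆ := by
    rw [commutatorElement_def, h]
    group
  rw [hc, derivedSeries_succ]
  exact Subgroup.commutator_mem_commutator ha hb

/-- `-1` lies in the third derived subgroup of `GL₂(𝔽₃)`: the elementary matrices are commutators
with `diag(1, -1)`, commutators of these generate the quaternion subgroup, and `-1` is a commutator
of two quaternions. -/
theorem neg_one_mem : (-1 : GL23) ∈ derivedSeries GL23 3 := by
  have hS : matS ∈ derivedSeries GL23 0 := by simp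
  have hU : matU ∈ derivedSeries GL23 1 :=
    mem_derivedSeries_succ hS (b := matU) (by simp) (by ext i j; revert i j; decide)
  have hL : matL ∈ derivedSeries GL23 1 :=
    mem_derivedSeries_succ hS (b := matL) (by simp) (by ext i j; revert i j; decide)
  have hI : ⁅matU, matL⁆ ∈ derivedSeries GL23 2 := Subgroup.commutator_mem_commutator hU hL
  have hJ : ⁅matU⁻¹, matL⁆ ∈ derivedSeries GL23 2 :=
    Subgroup.commutator_mem_commutator (inv_mem hU) hL
  exact mem_derivedSeries_succ hI hJ (by ext i j; revert i j; decide)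

theorem derivedSeries_five_ne_bot : derivedSeries ExampleGroup 5 ≠ ⊥ := by
  have hm : (SemidirectProduct.inr (-1) : ExampleGroup) ∈ derivedSeries ExampleGroup 3 :=
    map_derivedSeries_le_derivedSeries (SemidirectProduct.inr : GL23 →* ExampleGroup) 3
      (Subgroup.mem_map_of_mem _ neg_one_mem)
  -- Each `(v, 0)` is its own commutator with `-1`, as `-2v = v` in characteristic `3`.
  have hv : ∀ x y : ZMod 3, ∀ k ≤ 4,
      (SemidirectProduct.inl ⟨x, y, 0⟩ : ExampleGroup) ∈ derivedSeries ExampleGroup k := by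
    intro x y k
    induction k with
    | zero => intro _; simp
    | succ k ih =>
      intro hk
      refine mem_derivedSeries_succ (derivedSeries_antitone _ (by omega) hm) (ih (by omega)) ?_
      ext
      · clear ih; revert x y; decide
      · clear ih; revert x y; decide
      · clear ih; revert x y; decide
      · simp
  have hz : (SemidirectProduct.inl ⟨0, 0, 2⟩ : ExampleGroup) ∈ derivedSeries ExampleGroup 5 := by
    refine mem_derivedSeries_succ (hv 1 0 4 le_rfl) (hv 0 1 4 le_rfl) ?_
    rw [← map_mul, ← map_mul, ← map_mul]
    congr 1
  intro h
  rw [h, Subgroup.mem_bot] at hz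
  have := congrArg (fun g : ExampleGroup => g.left.z) hz
  exact absurd this (by decide)

/-- Every finite solvable group of derived length exactly 6 has composition length
at least 8, and this bound is attained. -/
theorem cS_six_eq_eight :
    (∀ (G : Type u) (inst : Group G) (m : ℕ), @SolvableGroupData G inst 6 m → 8 ≤ m) ∧
    (∃ (G : Type) (inst : Group G), @SolvableGroupData G inst 6 8) := by
  refine ⟨?_, ExampleGroup, inferInstance, ?_⟩
  · rintro G inst m ⟨hfin, hsol, -, h5, rfl⟩
    have : Group.IsSolvable G := hsol
    exact eight_le_Omega h5
  · have hcard : (Nat.card ExampleGroup).primeFactorsList.length = 8 := by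
      rw [card_exampleGroup, ← ArithmeticFunction.cardFactors_apply,
        show 1296 = 2 ^ 4 * 3 ^ 4 by norm_num, ArithmeticFunction.cardFactors_mul (by norm_num)
          (by norm_num), ArithmeticFunction.cardFactors_apply_prime_pow Nat.prime_two,
        ArithmeticFunction.cardFactors_apply_prime_pow Nat.prime_three]
    refine ⟨inferInstance, inferInstanceAs (Group.IsSolvable ExampleGroup), ?_,
      derivedSeries_five_ne_bot, hcard⟩
    by_contra h6
    have := nine_le_Omega h6
    omega
end

section
/- Let d ≥ 1 and n ≥ 1, and suppose there exists a finite solvable group of derived length exactly d and composition length n. Then there exists a finite solvable group of derived length exactly d + 1 and composition length at most 2n + 1. -/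
theorem derivedSeries_succ_eq_map_commutator (W : Type*) [Group W] (k : ℕ) :
    derivedSeries W (k + 1) =
      (derivedSeries (commutator W) k).map (commutator W).subtype := by
  induction k with
  | zero => rw [derivedSeries_zero, ← MonoidHom.range_eq_map, Subgroup.range_subtype, zero_add,
      derivedSeries_one]
  | succ k ih => rw [derivedSeries_succ, ih, derivedSeries_succ, Subgroup.map_commutator]

theorem derivedSeries_succ_eq_bot_iff (W : Type*) [Group W] (k : ℕ) :
    derivedSeries W (k + 1) = ⊥ ↔ derivedSeries (commutator W) k = ⊥ := by
  rw [derivedSeries_succ_eq_map_commutator,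
    Subgroup.map_eq_bot_iff_of_injective _ (Subgroup.subtype_injective _)]

section Wreath

variable {G Q : Type*} [Group G] [CommGroup Q]

theorem right_eq_one_of_mem_commutator {w : RegularWreathProduct G Q}
    (hw : w ∈ commutator (RegularWreathProduct G Q)) : w.right = 1 :=
  Abelianization.commutator_subset_ker (RegularWreathProduct.rightHom) hw

/-- The coordinate at `q` of an element of the derived subgroup of `G ≀ Q`, where `Q` is abelian.
It is multiplicative because the derived subgroup lies in the base group. -/
def coordHom (q : Q) : commutator (RegularWreathProduct G Q) →* G where
  toFun w := w.1.left q
  map_one' := rfl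
  map_mul' a b := by
    simp [RegularWreathProduct.mul_left, right_eq_one_of_mem_commutator a.2]

theorem eq_one_of_coordHom_eq_one (w : commutator (RegularWreathProduct G Q))
    (h : ∀ q, coordHom q w = 1) : w = 1 := by
  apply Subtype.ext
  apply RegularWreathProduct.ext
  · exact funext h
  · exact right_eq_one_of_mem_commutator w.2

open scoped commutatorElement in
theorem coordHom_one_surjective [Nontrivial Q] :
    Function.Surjective (coordHom (1 : Q) : commutator (RegularWreathProduct G Q) →* G) := by
  classical
  intro g
  obtain ⟨c, hc⟩ := exists_ne (1 : Q)
  let a : RegularWreathProduct G Q := ⟨1, c⟩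
  let b : RegularWreathProduct G Q := ⟨Pi.mulSingle 1 g⁻¹, 1⟩
  refine ⟨⟨⁅a, b⁆, Subgroup.commutator_mem_commutator (Subgroup.mem_top a)
    (Subgroup.mem_top b)⟩, ?_⟩
  have hc' : c⁻¹ ≠ 1 := inv_ne_one.mpr hc
  simp [coordHom, commutatorElement_def, a, b, Pi.mulSingle_eq_of_ne hc']

theorem derivedSeries_wreath_succ_eq_bot_iff [Nontrivial Q] (k : ℕ) :
    derivedSeries (RegularWreathProduct G Q) (k + 1) = ⊥ ↔ derivedSeries G k = ⊥ := by
  rw [derivedSeries_succ_eq_bot_iff]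
  constructor
  · intro h
    rw [← map_derivedSeries_eq (coordHom_one_surjective (G := G) (Q := Q)) k, h, Subgroup.map_bot]
  · intro h
    rw [Subgroup.eq_bot_iff_forall]
    intro w hw
    refine eq_one_of_coordHom_eq_one w fun q => ?_
    have := map_derivedSeries_le_derivedSeries (coordHom (G := G) q) k
      (Subgroup.mem_map_of_mem _ hw)
    rwa [h, Subgroup.mem_bot] at this

end Wreath

/-- If there exists a finite solvable group of derived length exactly `d ≥ 1` and
composition length `n ≥ 1`, then there exists a finite solvable group of derived
length exactly `d + 1` and composition length at most `2n + 1`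
(realized by the wreath product `G wr C₂`). -/
theorem exists_succ_derivedLength_of_exists (d n : ℕ) (hd : 1 ≤ d) (hn : 1 ≤ n)
    (h : ∃ (G : Type) (inst : Group G), @SolvableGroupData G inst d n) :
    ∃ (G : Type) (inst : Group G) (m : ℕ), m ≤ 2 * n + 1 ∧
      @SolvableGroupData G inst (d + 1) m := by
  obtain ⟨G, _, hfin, -, hbot, hne, hcard⟩ := h
  obtain ⟨d, rfl⟩ : ∃ e, d = e + 1 := ⟨d - 1, by omega⟩
  have htop := (derivedSeries_wreath_succ_eq_bot_iff (Q := Multiplicative (ZMod 2)) (d + 1)).2 hbot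
  refine ⟨RegularWreathProduct G (Multiplicative (ZMod 2)), inferInstance, 2 * n + 1, le_rfl,
    inferInstance, ⟨⟨_, htop⟩⟩, htop, ?_, ?_⟩
  · exact fun h => hne ((derivedSeries_wreath_succ_eq_bot_iff d).1 h)
  · have h0 : Nat.card G ≠ 0 := Nat.card_pos.ne'
    have h2 : Nat.card (Multiplicative (ZMod 2)) = 2 := by simp
    rw [RegularWreathProduct.card, h2, ← ArithmeticFunction.cardFactors_apply,
      ArithmeticFunction.cardFactors_mul (pow_ne_zero _ h0) two_ne_zero,
      ArithmeticFunction.cardFactors_pow,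
      ArithmeticFunction.cardFactors_apply_prime Nat.prime_two,
      ArithmeticFunction.cardFactors_apply, hcard]
end

section
/- For every integer r ≥ 1 there exists a finite solvable group of derived length exactly 3r whose composition length equals 4(4^r − 1)/3. In particular, for every d that is a multiple of 3, the minimal composition length of a finite solvable group of derived length d is less than (4/3)·4^{d/3}. -/
open Equiv SemidirectProduct
open scoped commutatorElement

lemma commutator_mem_derivedSeries_succ {G : Type*} [Group G] {k : ℕ} {a b : G}
    (ha : a ∈ derivedSeries G k) (hb : b ∈ derivedSeries G k) :
    ⁅a, b⁆ ∈ derivedSeries G (k + 1) := by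
  rw [derivedSeries_succ]
  exact Subgroup.commutator_mem_commutator ha hb

/-! ### The derived series of `S₄` -/

lemma derivedSeries_perm_one_le :
    derivedSeries (Perm (Fin 4)) 1 ≤ alternatingGroup (Fin 4) := by
  rw [derivedSeries_succ, Subgroup.commutator_le]
  intro a _ b _
  rw [Perm.mem_alternatingGroup, map_commutatorElement, commutatorElement_eq_one_iff_mul_comm,
    mul_comm]

/-- The Klein four-group inside `S₄`: the even permutations of order at most two. -/
def kleinS4 : Subgroup (Perm (Fin 4)) where
  carrier := {g | g * g = 1 ∧ Perm.sign g = 1}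
  one_mem' := by simp
  mul_mem' := by
    intro a b ha hb
    revert a b
    simp only [Set.mem_ofPred_eq]
    decide +kernel
  inv_mem' := by
    rintro a ⟨h1, h2⟩
    refine ⟨?_, by simpa using h2⟩
    rw [← mul_inv_rev, h1, inv_one]

lemma derivedSeries_perm_two_le : derivedSeries (Perm (Fin 4)) 2 ≤ kleinS4 := by
  rw [derivedSeries_succ]
  refine (Subgroup.commutator_mono derivedSeries_perm_one_le derivedSeries_perm_one_le).trans ?_
  rw [Subgroup.commutator_le]
  have key : ∀ a b : Perm (Fin 4), Perm.sign a = 1 → Perm.sign b = 1 →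
      ⁅a, b⁆ * ⁅a, b⁆ = 1 ∧ Perm.sign ⁅a, b⁆ = 1 := by decide +kernel
  intro a ha b hb
  exact key a b ha hb

lemma derivedSeries_perm_three : derivedSeries (Perm (Fin 4)) 3 = ⊥ := by
  rw [derivedSeries_succ, eq_bot_iff]
  refine (Subgroup.commutator_mono derivedSeries_perm_two_le derivedSeries_perm_two_le).trans ?_
  rw [Subgroup.commutator_le]
  have key : ∀ a b : Perm (Fin 4), (a * a = 1 ∧ Perm.sign a = 1) → (b * b = 1 ∧ Perm.sign b = 1) →
      ⁅a, b⁆ = 1 := by decide +kernel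
  intro a ha b hb
  exact Subgroup.mem_bot.2 (key a b ha hb)

/-- Three-cycles, obtained as commutators of transpositions. -/
lemma threeCycle_mem {i j k : Fin 4} (h : i ≠ j ∧ j ≠ k ∧ i ≠ k) :
    swap i j * swap j k ∈ derivedSeries (Perm (Fin 4)) 1 := by
  have key : ∀ i j k : Fin 4, i ≠ j ∧ j ≠ k ∧ i ≠ k →
      ⁅swap j k, swap i j⁆ = swap i j * swap j k := by decide +kernel
  rw [← key i j k h]
  exact commutator_mem_derivedSeries_succ (k := 0) (by simp) (by simp)

/-- A double transposition, obtained as a commutator of three-cycles. -/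
lemma doubleSwap_mem : swap (0 : Fin 4) 3 * swap 1 2 ∈ derivedSeries (Perm (Fin 4)) 2 := by
  have key : ⁅swap (0 : Fin 4) 3 * swap 3 1, swap (0 : Fin 4) 3 * swap 3 2⁆
      = swap (0 : Fin 4) 3 * swap 1 2 := by decide +kernel
  rw [← key]
  exact commutator_mem_derivedSeries_succ (threeCycle_mem (by decide)) (threeCycle_mem (by decide))

/-! ### Permutational wreath products with `S₄` -/

/-- The permutational wreath product of `D` with `S₄` acting on four points. -/
abbrev Wr (D : Type*) [Group D] : Type _ :=
  (Fin 4 → D) ⋊[(mulAutArrow : Perm (Fin 4) →* MulAut (Fin 4 → D))] Perm (Fin 4)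

section Wr

variable {D : Type*} [Group D]

lemma commutator_inl_inr (f : Fin 4 → D) (σ : Perm (Fin 4)) :
    ⁅(inl f : Wr D), (inr σ : Wr D)⁆ = inl (fun i => f i * (f (σ⁻¹ i))⁻¹) := by
  have h := inl_aut (φ := (mulAutArrow : Perm (Fin 4) →* MulAut (Fin 4 → D))) σ f⁻¹
  rw [commutatorElement_def, mul_assoc, mul_assoc, ← map_inv inl f, ← mul_assoc (inr σ),
    ← map_inv inr σ, ← h, ← map_mul]
  rfl

lemma inr_mem_derivedSeries {σ : Perm (Fin 4)} {k : ℕ}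
    (h : σ ∈ derivedSeries (Perm (Fin 4)) k) : (inr σ : Wr D) ∈ derivedSeries (Wr D) k :=
  map_derivedSeries_le_derivedSeries inr k (Subgroup.mem_map_of_mem _ h)

lemma exists_mem_derivedSeries_three (d : D) :
    ∃ f : Fin 4 → D, (inl f : Wr D) ∈ derivedSeries (Wr D) 3 ∧ f 0 = d := by
  have h0 : (inl ![d, 1, 1, 1] : Wr D) ∈ derivedSeries (Wr D) 0 := by simp
  have h1 := commutator_mem_derivedSeries_succ h0
    (inr_mem_derivedSeries (σ := swap 0 1) (k := 0) (by simp))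
  rw [commutator_inl_inr] at h1
  have h2 := commutator_mem_derivedSeries_succ h1
    (inr_mem_derivedSeries (threeCycle_mem (i := 0) (j := 1) (k := 2) (by decide)))
  rw [commutator_inl_inr] at h2
  have h3 := commutator_mem_derivedSeries_succ h2 (inr_mem_derivedSeries doubleSwap_mem)
  rw [commutator_inl_inr] at h3
  refine ⟨_, h3, ?_⟩
  -- Preimages of the relevant points under the three permutations.
  have e1 : (swap (0 : Fin 4) 3 * swap 1 2 : Perm (Fin 4))⁻¹ 0 = 3 := by decide
  have e2 : (swap (0 : Fin 4) 1 * swap 1 2 : Perm (Fin 4))⁻¹ 0 = 2 := by decide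
  have e3 : (swap (0 : Fin 4) 1 * swap 1 2 : Perm (Fin 4))⁻¹ 3 = 3 := by decide
  have e4 : (swap (0 : Fin 4) 1)⁻¹ 0 = 1 := by decide
  have e5 : (swap (0 : Fin 4) 1)⁻¹ 2 = 2 := by decide
  have e6 : (swap (0 : Fin 4) 1)⁻¹ 3 = 3 := by decide
  simp only [e1, e2, e3, e4, e5, e6]
  simp

lemma exists_mem_derivedSeries_wr (k : ℕ) {d : D} (hd : d ∈ derivedSeries D k) :
    ∃ f : Fin 4 → D, (inl f : Wr D) ∈ derivedSeries (Wr D) (3 + k) ∧ f 0 = d := by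
  -- The first coordinates of base elements of the `(3 + k)`-th term form a subgroup of `D`.
  suffices h : derivedSeries D k ≤
      ((derivedSeries (Wr D) (3 + k)).comap inl).map (Pi.evalMonoidHom (fun _ : Fin 4 => D) 0) by
    obtain ⟨f, hf, hfd⟩ := h hd
    exact ⟨f, hf, hfd⟩
  clear hd d
  induction k with
  | zero =>
    intro d _
    obtain ⟨f, hf, hfd⟩ := exists_mem_derivedSeries_three d
    exact ⟨f, hf, hfd⟩
  | succ k ih =>
    rw [derivedSeries_succ, Subgroup.commutator_le]
    intro a ha b hb
    obtain ⟨f, hf, rfl⟩ := ih ha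
    obtain ⟨g, hg, rfl⟩ := ih hb
    refine ⟨⁅f, g⁆, ?_, map_commutatorElement _ _ _⟩
    change (inl ⁅f, g⁆ : Wr D) ∈ derivedSeries (Wr D) (3 + k + 1)
    rw [map_commutatorElement]
    exact commutator_mem_derivedSeries_succ hf hg

lemma derivedSeries_wr_le (k : ℕ) :
    derivedSeries (Wr D) (3 + k) ≤
      (Subgroup.pi Set.univ (fun _ : Fin 4 => derivedSeries D k)).map inl := by
  induction k with
  | zero =>
    intro w hw
    have h : rightHom w ∈ derivedSeries (Perm (Fin 4)) 3 :=
      map_derivedSeries_le_derivedSeries rightHom 3 (Subgroup.mem_map_of_mem _ hw)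
    rw [derivedSeries_perm_three, Subgroup.mem_bot] at h
    refine ⟨w.left, fun i _ => by simp, ?_⟩
    ext1
    · simp
    · simpa using h.symm
  | succ k ih =>
    rw [← add_assoc, derivedSeries_succ, Subgroup.commutator_le]
    intro a ha b hb
    obtain ⟨f, hf, rfl⟩ := ih ha
    obtain ⟨g, hg, rfl⟩ := ih hb
    refine ⟨⁅f, g⁆, fun i _ => ?_, map_commutatorElement _ _ _⟩
    exact commutator_mem_derivedSeries_succ (hf i trivial) (hg i trivial)

end Wr

/-! ### Composition lengths and the induction -/

lemma card_perm_fin_four : Nat.card (Perm (Fin 4)) = 24 := by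
  rw [Nat.card_perm, Nat.card_fin]
  rfl

lemma cardFactors_24 : ArithmeticFunction.cardFactors 24 = 4 := by
  rw [show 24 = 2 ^ 3 * 3 by norm_num,
    ArithmeticFunction.cardFactors_mul (by norm_num) (by norm_num),
    ArithmeticFunction.cardFactors_apply_prime_pow Nat.prime_two,
    ArithmeticFunction.cardFactors_apply_prime Nat.prime_three]

lemma solvableGroupData_perm : SolvableGroupData (Perm (Fin 4)) 3 4 := by
  refine ⟨inferInstance, ⟨3, derivedSeries_perm_three⟩, derivedSeries_perm_three, fun h => ?_, ?_⟩
  · have := doubleSwap_mem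
    rw [show 2 = 3 - 1 from rfl, h, Subgroup.mem_bot] at this
    exact absurd this (by decide)
  · rw [card_perm_fin_four, ← ArithmeticFunction.cardFactors_apply, cardFactors_24]

lemma SolvableGroupData.wr {D : Type} [Group D] {d n : ℕ} (hd : 1 ≤ d)
    (h : SolvableGroupData D d n) : SolvableGroupData (Wr D) (3 + d) (4 * n + 4) := by
  obtain ⟨hfin, -, hbot, hne, hn⟩ := h
  have hW : derivedSeries (Wr D) (3 + d) = ⊥ := by
    rw [eq_bot_iff]
    refine (derivedSeries_wr_le d).trans ?_
    rw [hbot]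
    rintro _ ⟨f, hf, rfl⟩
    have : f = 1 := funext fun i => hf i trivial
    simp [this]
  refine ⟨Finite.of_equiv _ SemidirectProduct.equivProd.symm, ⟨_, hW⟩, hW, fun h => hne ?_, ?_⟩
  · rw [eq_bot_iff]
    intro x hx
    obtain ⟨f, hf, rfl⟩ := exists_mem_derivedSeries_wr (d - 1) hx
    rw [← Nat.add_sub_assoc hd, h, Subgroup.mem_bot] at hf
    have : f = 1 := inl_injective (by simpa using hf)
    simp [this]
  · have hD : Nat.card D ≠ 0 := Nat.card_pos.ne'
    rw [SemidirectProduct.card, card_perm_fin_four, Nat.card_fun, Nat.card_fin,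
      ← ArithmeticFunction.cardFactors_apply,
      ArithmeticFunction.cardFactors_mul (pow_ne_zero _ hD) (by norm_num),
      ArithmeticFunction.cardFactors_pow, cardFactors_24, ArithmeticFunction.cardFactors_apply, hn]

lemma exists_solvableGroupData (r : ℕ) (hr : 1 ≤ r) : ∃ (G : Type) (inst : Group G),
    @SolvableGroupData G inst (3 * r) (4 * (4 ^ r - 1) / 3) := by
  induction r, hr using Nat.le_induction with
  | base => exact ⟨Perm (Fin 4), inferInstance, solvableGroupData_perm⟩
  | succ r hr ih =>
    obtain ⟨G, inst, h⟩ := ih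
    refine ⟨Wr G, inferInstance, ?_⟩
    have h3 : 3 ∣ 4 ^ r - 1 := by simpa using Nat.sub_dvd_pow_sub_pow 4 1 r
    have hpos : 1 ≤ 4 ^ r := Nat.one_le_pow _ _ (by norm_num)
    have e : 4 * (4 ^ (r + 1) - 1) / 3 = 4 * (4 * (4 ^ r - 1) / 3) + 4 := by
      rw [pow_succ]
      omega
    rw [e, mul_add, mul_one, add_comm]
    exact h.wr (by omega)

/-- For every `r ≥ 1` there is a finite solvable group of derived length exactly
`3r` and composition length `4(4^r - 1)/3` (the `r`-fold wreath power of `S₄`).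
In particular, for every `d ≥ 1` divisible by 3, the minimal composition length
of a finite solvable group of derived length `d` is less than `(4/3)·4^{d/3}`,
i.e. some such group `G` satisfies `3·c(G) < 4·4^{d/3}`. -/
theorem exists_derivedLength_three_r :
    (∀ r : ℕ, 1 ≤ r → ∃ (G : Type) (inst : Group G),
      @SolvableGroupData G inst (3 * r) (4 * (4 ^ r - 1) / 3)) ∧
    (∀ d : ℕ, 1 ≤ d → 3 ∣ d → ∃ (G : Type) (inst : Group G) (n : ℕ),
      @SolvableGroupData G inst d n ∧ 3 * n < 4 * 4 ^ (d / 3)) := by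
  refine ⟨exists_solvableGroupData, ?_⟩
  rintro _ hd ⟨r, rfl⟩
  obtain ⟨G, inst, h⟩ := exists_solvableGroupData r (by omega)
  refine ⟨G, inst, _, h, ?_⟩
  have hpos : 1 ≤ 4 ^ r := Nat.one_le_pow _ _ (by norm_num)
  rw [Nat.mul_div_cancel_left r (by norm_num)]
  omega
end
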